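/- For α > 1, ∫_{-π}^{π} (1 + e^{iφ})^{(3α/2) - 2} e^{iφ(1 - α/2)} dφ = 2π Γ(3α/2 - 1) / (Γ(α/2) Γ(α)), where the complex power uses the principal branch. -/

import Mathlib

/-!
Integrate `(1 + e ^ w) ^ β e ^ (s w)` around the rectangle with vertices `-R ± iπ` and `± iπ`. On
the two horizontal sides `e ^ w` is the negative real `-e ^ x`, so these sides differ only by the
phases `e ^ (± iπ s)` and together contribute `2 sin (π s) ∫ (1 - e ^ x) ^ β e ^ (s x) dx`, which
tends to `2 sin (π s) B(s, β + 1)` as `R → ∞`, while the left side vanishes. The reflection formula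
turns this into the quotient of Gamma values when `β` and `s` have positive real part. Both
sides are entire in `s`, which removes the condition on `s`; integrating the derivative of
`(1 + e ^ w) ^ (β + 1) e ^ (s w)` over `[-iπ, iπ]` relates `β` to `β + 1` and so extends the range
of `β` to `-1 < β.re`.
-/

open Complex Filter MeasureTheory Set Topology
open scoped Interval Real

theorem neg_mul_le_mul_abs {a b c : ℝ} (h : |a| ≤ c) : -(a * b) ≤ c * |b| := calc
  -(a * b) ≤ |a| * |b| := by rw [← abs_mul]; exact neg_le_abs _
  _ ≤ c * |b| := by gcongr

theorem norm_cpow_le_rpow_mul_exp (z w : ℂ) :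
    ‖z ^ w‖ ≤ ‖z‖ ^ w.re * Real.exp (π * |w.im|) := by
  calc ‖z ^ w‖ ≤ ‖z‖ ^ w.re * Real.exp (-(arg z * w.im)) := by
        rw [Real.exp_neg, ← div_eq_mul_inv]; exact norm_cpow_le z w
    _ ≤ ‖z‖ ^ w.re * Real.exp (π * |w.im|) := by
      gcongr
      exact neg_mul_le_mul_abs (abs_arg_le_pi z)

theorem inv_Gamma_one_sub {s : ℂ} (hs : Gamma s ≠ 0) :
    (Gamma (1 - s))⁻¹ = sin (π * s) * Gamma s / π := by
  have reflection : (Gamma s * Gamma (1 - s))⁻¹ = sin (π * s) / π := by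
    rw [Gamma_mul_Gamma_one_sub, inv_div]
  rw [mul_inv, inv_mul_eq_iff_eq_mul₀ hs] at reflection
  rw [reflection]
  ring

theorem differentiable_intervalIntegral_mul_exp {a b : ℝ} {g u : ℝ → ℂ}
    (hg : IntervalIntegrable g volume a b) (hu : Continuous u) :
    Differentiable ℂ fun s : ℂ ↦ ∫ t in a..b, g t * exp (u t * s) := by
  intro s₀
  obtain ⟨M, hM⟩ := (isCompact_uIcc (a := a) (b := b)).exists_bound_of_continuousOn hu.continuousOn
  have integrand_integrable (s : ℂ) : IntervalIntegrable (fun t ↦ g t * exp (u t * s)) volume a b :=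
    hg.mul_continuousOn (by fun_prop)
  have deriv_integrable : IntervalIntegrable (fun t ↦ g t * (exp (u t * s₀) * u t)) volume a b :=
    hg.mul_continuousOn (by fun_prop)
  refine (intervalIntegral.hasDerivAt_integral_of_dominated_loc_of_deriv_le
    (F' := fun s t ↦ g t * (exp (u t * s) * u t))
    (bound := fun t ↦ ‖g t‖ * (Real.exp (M * (‖s₀‖ + 1)) * M)) (Metric.ball_mem_nhds s₀ one_pos)
    (.of_forall fun s ↦ (integrand_integrable s).def'.aestronglyMeasurable)
    (integrand_integrable s₀) deriv_integrable.def'.aestronglyMeasurable ?_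
    (hg.norm.mul_const _) ?_).2.differentiableAt
  · refine .of_forall fun t ht s hs ↦ ?_
    have norm_u_le : ‖u t‖ ≤ M := hM t (uIoc_subset_uIcc ht)
    have norm_s_le : ‖s‖ ≤ ‖s₀‖ + 1 := by
      linarith [norm_le_norm_add_norm_sub' s s₀, mem_ball_iff_norm.1 hs]
    have norm_exp_le : ‖exp (u t * s)‖ ≤ Real.exp (M * (‖s₀‖ + 1)) := by
      refine (norm_exp_le_exp_norm _).trans (Real.exp_le_exp.2 ?_)
      rw [norm_mul]
      gcongr
      exact (norm_nonneg _).trans norm_u_le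
    rw [norm_mul, norm_mul]
    gcongr
  · refine .of_forall fun t _ s _ ↦ HasDerivAt.const_mul _ ?_
    simpa using ((hasDerivAt_id s).const_mul (u t)).cexp

theorem one_add_exp_re_nonneg {w : ℂ} (hre : w.re ≤ 0) : 0 ≤ (1 + exp w).re := by
  rw [add_re, one_re, exp_re]
  nlinarith [Real.exp_le_one_iff.2 hre, Real.exp_pos w.re, Real.neg_one_le_cos w.im]

theorem one_add_exp_re_pos {w : ℂ} (hre : w.re ≤ 0) (him : |w.im| < π) :
    0 < (1 + exp w).re := by
  have neg_one_lt_cos : -1 < Real.cos w.im := by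
    rw [← Real.cos_pi, ← Real.cos_abs w.im]
    exact Real.cos_lt_cos_of_nonneg_of_le_pi (abs_nonneg _) le_rfl him
  rw [add_re, one_re, exp_re]
  nlinarith [Real.exp_le_one_iff.2 hre, Real.exp_pos w.re]

theorem norm_one_add_exp_mul_I (φ : ℝ) : ‖1 + exp (φ * I)‖ = 2 * |Real.cos (φ / 2)| := by
  have half_angle : 1 + exp (φ * I) = (2 * Real.cos (φ / 2) : ℝ) * exp ((φ / 2 : ℝ) * I) := by
    push_cast
    rw [two_cos, add_mul, ← exp_add, ← exp_add, ← add_mul, ← add_mul, add_halves, neg_add_cancel,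
      zero_mul, exp_zero, add_comm]
  rw [half_angle, norm_mul, norm_exp_ofReal_mul_I, mul_one, norm_real, norm_mul, Real.norm_two,
    Real.norm_eq_abs]

theorem le_norm_one_add_exp_mul_I {φ : ℝ} (hφ : |φ| ≤ π) :
    2 / π * (π - |φ|) ≤ ‖1 + exp (φ * I)‖ := by
  have jordan : 1 - 2 / π * (|φ| / 2) ≤ Real.cos (|φ| / 2) :=
    Real.one_sub_mul_le_cos (by positivity) (by linarith)
  have cos_half_abs : Real.cos (|φ| / 2) = Real.cos (φ / 2) := by
    rw [← Real.cos_abs (φ / 2), abs_div, abs_two]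
  calc 2 / π * (π - |φ|) = 2 * (1 - 2 / π * (|φ| / 2)) := by field_simp
    _ ≤ 2 * |Real.cos (φ / 2)| := by
      rw [← cos_half_abs]; linarith [le_abs_self (Real.cos (|φ| / 2))]
    _ = ‖1 + exp (φ * I)‖ := (norm_one_add_exp_mul_I φ).symm

theorem continuousAt_one_add_exp_cpow {β w : ℂ} (hβ : 0 < β.re) (hw : w.re ≤ 0) :
    ContinuousAt (fun w ↦ (1 + exp w) ^ β) w :=
  (continuousAt_cpow_const_of_re_pos (.inl (one_add_exp_re_nonneg hw)) hβ).comp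
    (f := fun w ↦ 1 + exp w) (by fun_prop)

theorem norm_one_add_exp_mul_I_rpow_le {b φ : ℝ} (hb : b ≤ 0) (hφ : |φ| < π) :
    ‖1 + exp (φ * I)‖ ^ b ≤ (2 / π) ^ b * ((π - φ) ^ b + (π + φ) ^ b) := by
  obtain ⟨neg_pi_lt, lt_pi⟩ := abs_lt.1 hφ
  have distance_pos : 0 < π - |φ| := sub_pos.2 hφ
  calc ‖1 + exp (φ * I)‖ ^ b ≤ (2 / π * (π - |φ|)) ^ b :=
        Real.rpow_le_rpow_of_nonpos (by positivity) (le_norm_one_add_exp_mul_I hφ.le) hb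
    _ = (2 / π) ^ b * (π - |φ|) ^ b := Real.mul_rpow (by positivity) distance_pos.le
    _ ≤ (2 / π) ^ b * ((π - φ) ^ b + (π + φ) ^ b) := by
      have left_nonneg : 0 ≤ (π - φ) ^ b := Real.rpow_nonneg (by linarith) b
      have right_nonneg : 0 ≤ (π + φ) ^ b := Real.rpow_nonneg (by linarith) b
      gcongr
      rcases abs_choice φ with h | h <;> rw [h]
      · linarith
      · rw [sub_neg_eq_add]; linarith

theorem intervalIntegrable_pi_sub_rpow_add_pi_add_rpow {b : ℝ} (hb : -1 < b) :
    IntervalIntegrable (fun φ : ℝ ↦ (π - φ) ^ b + (π + φ) ^ b) volume (-π) π := by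
  have rpow_integrable : IntervalIntegrable (fun t : ℝ ↦ t ^ b) volume 0 (2 * π) :=
    intervalIntegral.intervalIntegrable_rpow' hb
  refine .add ?_ ?_
  · convert (rpow_integrable.comp_sub_left π).symm using 1 <;> ring
  · convert rpow_integrable.comp_add_left π using 1 <;> ring

theorem intervalIntegrable_one_add_exp_cpow {β : ℂ} (hβ : -1 < β.re) :
    IntervalIntegrable (fun φ : ℝ ↦ (1 + exp (φ * I)) ^ β) volume (-π) π := by
  rcases lt_or_ge 0 β.re with re_pos | re_nonpos
  · refine Continuous.intervalIntegrable (continuous_iff_continuousAt.2 fun φ ↦ ?_) _ _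
    exact (continuousAt_one_add_exp_cpow re_pos (by simp)).comp (f := fun φ : ℝ ↦ (φ : ℂ) * I)
      (by fun_prop)
  have measurable_integrand : Measurable fun φ : ℝ ↦ (1 + exp (φ * I)) ^ β := by fun_prop
  refine (((intervalIntegrable_pi_sub_rpow_add_pi_add_rpow hβ).const_mul
    ((2 / π) ^ β.re)).mul_const (Real.exp (π * |β.im|))).mono_fun'
    measurable_integrand.aestronglyMeasurable ?_
  rw [uIoc_of_le (by linarith [Real.pi_pos]), ← Measure.restrict_congr_set Ioo_ae_eq_Ioc]
  filter_upwards [ae_restrict_mem measurableSet_Ioo] with φ hφ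
  refine (norm_cpow_le_rpow_mul_exp _ β).trans ?_
  gcongr
  exact norm_one_add_exp_mul_I_rpow_le re_nonpos (abs_lt.2 hφ)

/-- The function `w ↦ (1 + e ^ w) ^ β e ^ (s w)`. The principal power makes it holomorphic on the
half-strip `w.re < 0`, `|w.im| < π`, where the contour is deformed. -/
noncomputable def binomialKernel (β s w : ℂ) : ℂ :=
  (1 + exp w) ^ β * exp (w * s)

/-- The Fourier coefficient of `φ ↦ (1 + e ^ (iφ)) ^ β` at the complex frequency `-s`, without the
factor `1 / 2π`: for natural `β` and `-s` it is `2π` times a binomial coefficient. -/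
noncomputable def binomialIntegral (β s : ℂ) : ℂ :=
  ∫ φ in (-π)..π, binomialKernel β s (φ * I)

theorem continuousAt_binomialKernel {β w : ℂ} (s : ℂ) (hβ : 0 < β.re) (hw : w.re ≤ 0) :
    ContinuousAt (binomialKernel β s) w :=
  (continuousAt_one_add_exp_cpow hβ hw).mul (by fun_prop)

theorem continuous_binomialKernel_mul_I {β : ℂ} (s : ℂ) (hβ : 0 < β.re) :
    Continuous fun φ : ℝ ↦ binomialKernel β s (φ * I) :=
  continuous_iff_continuousAt.2 fun φ ↦
    (continuousAt_binomialKernel s hβ (by simp)).comp (f := fun φ : ℝ ↦ (φ : ℂ) * I) (by fun_prop)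

theorem intervalIntegrable_binomialKernel {β : ℂ} (s : ℂ) (hβ : -1 < β.re) :
    IntervalIntegrable (fun φ : ℝ ↦ binomialKernel β s (φ * I)) volume (-π) π :=
  (intervalIntegrable_one_add_exp_cpow hβ).mul_continuousOn (by fun_prop)

theorem differentiable_binomialIntegral {β : ℂ} (hβ : -1 < β.re) :
    Differentiable ℂ (binomialIntegral β) :=
  differentiable_intervalIntegral_mul_exp (intervalIntegrable_one_add_exp_cpow hβ) (by fun_prop)

theorem hasDerivAt_binomialKernel_add_one (β s : ℂ) {w : ℂ} (hw : 0 < (1 + exp w).re) :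
    HasDerivAt (binomialKernel (β + 1) s)
      ((β + 1 + s) * binomialKernel (β + 1) s w - (β + 1) * binomialKernel β s w) w := by
  have base_ne_zero : 1 + exp w ≠ 0 := fun h ↦ by simp [h] at hw
  have deriv_power : HasDerivAt (fun w ↦ (1 + exp w) ^ (β + 1))
      ((β + 1) * (1 + exp w) ^ (β + 1 - 1) * exp w) w :=
    ((hasDerivAt_exp w).const_add 1).cpow_const (.inl hw)
  have deriv_exp : HasDerivAt (fun w ↦ exp (w * s)) (exp (w * s) * s) w := by
    simpa using ((hasDerivAt_id w).mul_const s).cexp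
  refine (deriv_power.mul deriv_exp).congr_deriv ?_
  rw [binomialKernel, binomialKernel, add_sub_cancel_right, cpow_add _ _ base_ne_zero, cpow_one]
  ring

theorem differentiableAt_binomialKernel (β s : ℂ) {w : ℂ} (hw : 0 < (1 + exp w).re) :
    DifferentiableAt ℂ (binomialKernel β s) w := by
  simpa using (hasDerivAt_binomialKernel_add_one (β - 1) s hw).differentiableAt

theorem binomialKernel_add_pi_mul_I (β s w : ℂ) :
    binomialKernel β s (w + π * I) = exp (π * s * I) * ((1 - exp w) ^ β * exp (w * s)) := by
  rw [binomialKernel, exp_add, exp_pi_mul_I, mul_neg_one, ← sub_eq_add_neg, add_mul, exp_add]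
  ring_nf

theorem binomialKernel_sub_pi_mul_I (β s w : ℂ) :
    binomialKernel β s (w - π * I) = exp (-(π * s) * I) * ((1 - exp w) ^ β * exp (w * s)) := by
  rw [binomialKernel, exp_sub, exp_pi_mul_I, div_neg, div_one, ← sub_eq_add_neg, sub_mul,
    sub_eq_add_neg (w * s), exp_add]
  ring_nf

theorem hasDerivAt_binomialKernel_add_one_mul_I (β s : ℂ) {φ : ℝ} (hφ : |φ| < π) :
    HasDerivAt (fun φ : ℝ ↦ binomialKernel (β + 1) s (φ * I))
      (I * ((β + 1 + s) * binomialKernel (β + 1) s (φ * I) -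
        (β + 1) * binomialKernel β s (φ * I))) φ := by
  have base_re_pos : 0 < (1 + exp (φ * I)).re :=
    one_add_exp_re_pos (by simp) (by simpa using hφ)
  have deriv_line : HasDerivAt (fun φ : ℝ ↦ (φ : ℂ) * I) I φ := by
    simpa using (hasDerivAt_id φ).ofReal_comp.mul_const I
  exact HasDerivAt.scomp φ (hasDerivAt_binomialKernel_add_one β s base_re_pos) deriv_line

theorem add_one_mul_binomialIntegral {β : ℂ} (s : ℂ) (hβ : -1 < β.re) :
    (β + 1) * binomialIntegral β s = (β + 1 + s) * binomialIntegral (β + 1) s := by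
  have re_add_one_pos : 0 < (β + 1).re := by rw [add_re, one_re]; linarith
  have add_one_ne_zero : β + 1 ≠ 0 := fun h ↦ by simp [h] at re_add_one_pos
  have endpoint_pi : binomialKernel (β + 1) s (π * I) = 0 := by
    simpa [zero_cpow add_one_ne_zero] using binomialKernel_add_pi_mul_I (β + 1) s 0
  have endpoint_neg_pi : binomialKernel (β + 1) s ((-π : ℝ) * I) = 0 := by
    simpa [zero_cpow add_one_ne_zero] using binomialKernel_sub_pi_mul_I (β + 1) s 0
  have integrable_raised := (intervalIntegrable_binomialKernel (β := β + 1) s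
    (by linarith)).const_mul (β + 1 + s)
  have integrable_lowered := (intervalIntegrable_binomialKernel s hβ).const_mul (β + 1)
  have integral_deriv := intervalIntegral.integral_eq_sub_of_hasDerivAt_of_le
    (by linarith [Real.pi_pos]) (continuous_binomialKernel_mul_I s re_add_one_pos).continuousOn
    (fun φ hφ ↦ hasDerivAt_binomialKernel_add_one_mul_I β s (abs_lt.2 hφ))
    ((integrable_raised.sub integrable_lowered).const_mul I)
  rw [endpoint_pi, endpoint_neg_pi, sub_zero, intervalIntegral.integral_const_mul,
    intervalIntegral.integral_sub integrable_raised integrable_lowered,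
    intervalIntegral.integral_const_mul, intervalIntegral.integral_const_mul] at integral_deriv
  exact (sub_eq_zero.1 ((mul_eq_zero.1 integral_deriv).resolve_left I_ne_zero)).symm

theorem continuousOn_cpow_mul_one_sub_cpow {β : ℂ} (s : ℂ) (hβ : 0 < β.re) :
    ContinuousOn (fun t : ℝ ↦ (t : ℂ) ^ s * (1 - t : ℂ) ^ β) (Ioc 0 1) := by
  intro t ht
  have re_nonneg : 0 ≤ (1 - (t : ℂ)).re := by
    rw [sub_re, one_re, ofReal_re]
    exact sub_nonneg.2 ht.2
  refine ContinuousAt.continuousWithinAt (.mul ?_ ?_)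
  · exact (continuousAt_cpow_const (.inl ht.1)).comp continuous_ofReal.continuousAt
  · exact (continuousAt_cpow_const_of_re_pos (.inl re_nonneg) hβ).comp
      (f := fun t : ℝ ↦ 1 - (t : ℂ)) (by fun_prop)

theorem integral_one_sub_exp_cpow_mul_exp {β : ℂ} (s : ℂ) (hβ : 0 < β.re) {R : ℝ} (hR : 0 ≤ R) :
    ∫ x in (-R)..0, (1 - exp x) ^ β * exp (x * s) =
      ∫ t in (Real.exp (-R))..1, (t : ℂ) ^ (s - 1) * (1 - t : ℂ) ^ β := by
  have image_subset : Real.exp '' [[-R, 0]] ⊆ Ioc 0 1 := by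
    rintro _ ⟨x, hx, rfl⟩
    rw [uIcc_of_le (by linarith)] at hx
    exact ⟨Real.exp_pos x, Real.exp_le_one_iff.2 hx.2⟩
  rw [← Real.exp_zero, ← intervalIntegral.integral_deriv_smul_comp'
    (fun x _ ↦ Real.hasDerivAt_exp x) Real.continuous_exp.continuousOn
    ((continuousOn_cpow_mul_one_sub_cpow (s - 1) hβ).mono image_subset)]
  refine intervalIntegral.integral_congr fun x _ ↦ ?_
  have exp_mul_exp_cpow : exp x * exp x ^ (s - 1) = exp (x * s) := by
    rw [cpow_def_of_ne_zero (exp_ne_zero x), log_exp (by simp [Real.pi_pos])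
      (by simp [Real.pi_nonneg]), ← exp_add]
    ring_nf
  simp only [Function.comp_apply, real_smul, ofReal_exp]
  rw [← exp_mul_exp_cpow]
  ring

theorem tendsto_integral_one_sub_exp_cpow_mul_exp {β s : ℂ} (hβ : 0 < β.re) (hs : 0 < s.re) :
    Tendsto (fun R : ℝ ↦ ∫ x in (-R)..0, (1 - exp x) ^ β * exp (x * s)) atTop
      (𝓝 (betaIntegral s (β + 1))) := by
  let f : ℝ → ℂ := fun t ↦ (t : ℂ) ^ (s - 1) * (1 - t : ℂ) ^ (β + 1 - 1)
  have continuousOn_lower : ContinuousOn (fun a ↦ ∫ t in a..1, f t) [[0, 1]] := by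
    refine intervalIntegral.continuousOn_primitive_interval_left ?_
    rw [uIcc_of_le zero_le_one, integrableOn_Icc_iff_integrableOn_Ioc,
      ← intervalIntegrable_iff_integrableOn_Ioc_of_le zero_le_one]
    exact betaIntegral_convergent hs (by rw [add_re, one_re]; linarith)
  have exp_neg_tendsto : Tendsto (fun R : ℝ ↦ Real.exp (-R)) atTop (𝓝[[[0, 1]]] 0) := by
    refine tendsto_nhdsWithin_iff.2 ⟨Real.tendsto_exp_neg_atTop_nhds_zero, ?_⟩
    filter_upwards [eventually_ge_atTop 0] with R hR
    rw [uIcc_of_le zero_le_one]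
    exact ⟨(Real.exp_pos _).le, Real.exp_le_one_iff.2 (neg_nonpos.2 hR)⟩
  refine ((continuousOn_lower 0 left_mem_uIcc).tendsto.comp exp_neg_tendsto).congr' ?_
  filter_upwards [eventually_ge_atTop 0] with R hR
  simp only [integral_one_sub_exp_cpow_mul_exp s hβ hR, Function.comp_apply, f,
    add_sub_cancel_right]

theorem binomialIntegral_eq_two_mul_sin_mul_integral_add_integral {β : ℂ} (s : ℂ)
    (hβ : 0 < β.re) {R : ℝ} (hR : 0 ≤ R) :
    binomialIntegral β s =
      2 * sin (π * s) * (∫ x in (-R)..0, (1 - exp x) ^ β * exp (x * s)) +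
        ∫ y in (-π)..π, binomialKernel β s (-R + y * I) := by
  have cauchy := integral_boundary_rect_eq_zero_of_continuousOn_of_differentiableOn
    (binomialKernel β s) ⟨-R, -π⟩ ⟨0, π⟩ ?continuous ?differentiable
  · simp only [ofReal_neg, neg_mul, ← sub_eq_add_neg, binomialKernel_sub_pi_mul_I,
      binomialKernel_add_pi_mul_I, intervalIntegral.integral_const_mul, ofReal_zero, zero_add,
      smul_eq_mul] at cauchy
    rw [two_sin, neg_mul, binomialIntegral]
    linear_combination (-I) * cauchy + ((∫ φ in (-π)..π, binomialKernel β s (φ * I)) -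
      ∫ y in (-π)..π, binomialKernel β s (-R + y * I)) * I_sq
  case continuous =>
    rintro w ⟨hw, -⟩
    have re_mem : w.re ∈ [[-R, 0]] := hw
    rw [uIcc_of_le (by linarith)] at re_mem
    exact (continuousAt_binomialKernel s hβ re_mem.2).continuousWithinAt
  case differentiable =>
    rintro w ⟨hre, him⟩
    have re_mem : w.re ∈ Ioo (min (-R) 0) (max (-R) 0) := hre
    have im_mem : w.im ∈ Ioo (min (-π) π) (max (-π) π) := him
    rw [max_eq_right (neg_nonpos.2 hR)] at re_mem
    rw [min_eq_left (by linarith [Real.pi_pos]), max_eq_right (by linarith [Real.pi_pos])] at im_mem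
    exact (differentiableAt_binomialKernel β s
      (one_add_exp_re_pos re_mem.2.le (abs_lt.2 im_mem))).differentiableWithinAt

theorem norm_binomialKernel_le {β : ℂ} (s : ℂ) (hβ : 0 ≤ β.re) {w : ℂ} (hw : w.re ≤ 0) :
    ‖binomialKernel β s w‖ ≤ 2 ^ β.re * Real.exp (π * |β.im|) * Real.exp (w * s).re := by
  have norm_base_le : ‖1 + exp w‖ ≤ 2 := by
    refine (norm_add_le _ _).trans ?_
    rw [norm_one, norm_exp]
    linarith [Real.exp_le_one_iff.2 hw]
  rw [binomialKernel, norm_mul, norm_exp]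
  gcongr
  refine (norm_cpow_le_rpow_mul_exp _ β).trans ?_
  gcongr

theorem norm_binomialKernel_neg_add_mul_I_le {β : ℂ} (s : ℂ) (hβ : 0 ≤ β.re) {R y : ℝ}
    (hR : 0 ≤ R) (hy : |y| ≤ π) :
    ‖binomialKernel β s (-R + y * I)‖ ≤
      2 ^ β.re * Real.exp (π * |β.im|) * Real.exp (π * |s.im| - R * s.re) := by
  refine (norm_binomialKernel_le s hβ (by simpa using hR)).trans ?_
  have re_mul : ((-R + y * I) * s).re = -(y * s.im) - R * s.re := by
    simp only [mul_re, add_re, add_im, neg_re, neg_im, ofReal_re, ofReal_im, mul_im, I_re, I_im]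
    ring
  rw [re_mul]
  gcongr
  exact neg_mul_le_mul_abs hy

theorem tendsto_integral_binomialKernel_neg_add_mul_I {β s : ℂ} (hβ : 0 ≤ β.re) (hs : 0 < s.re) :
    Tendsto (fun R : ℝ ↦ ∫ y in (-π)..π, binomialKernel β s (-R + y * I)) atTop (𝓝 0) := by
  have bound_tendsto : Tendsto (fun R : ℝ ↦ 2 ^ β.re * Real.exp (π * |β.im|) *
      Real.exp (π * |s.im| - R * s.re) * |π - -π|) atTop (𝓝 0) := by
    have exponent_tendsto : Tendsto (fun R : ℝ ↦ π * |s.im| - R * s.re) atTop atBot :=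
      tendsto_atBot_add_const_left _ _
        (tendsto_neg_atTop_atBot.comp (tendsto_id.atTop_mul_const hs))
    simpa using ((Real.tendsto_exp_atBot.comp exponent_tendsto).const_mul _).mul_const |π - -π|
  refine squeeze_zero_norm' ?_ bound_tendsto
  filter_upwards [eventually_ge_atTop 0] with R hR
  refine intervalIntegral.norm_integral_le_of_norm_le_const fun y hy ↦
    norm_binomialKernel_neg_add_mul_I_le s hβ hR ?_
  rw [uIoc_of_le (by linarith [Real.pi_pos])] at hy
  exact abs_le.2 ⟨hy.1.le, hy.2⟩

theorem binomialIntegral_eq_of_re_pos_of_re_pos {β s : ℂ} (hβ : 0 < β.re) (hs : 0 < s.re) :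
    binomialIntegral β s = 2 * π * Gamma (β + 1) / (Gamma (1 - s) * Gamma (β + 1 + s)) := by
  have limit := ((tendsto_integral_one_sub_exp_cpow_mul_exp hβ hs).const_mul
    (2 * sin (π * s))).add (tendsto_integral_binomialKernel_neg_add_mul_I hβ.le hs)
  have eq_beta : binomialIntegral β s = 2 * sin (π * s) * betaIntegral s (β + 1) := by
    rw [add_zero] at limit
    refine tendsto_nhds_unique (tendsto_const_nhds.congr' ?_) limit
    filter_upwards [eventually_ge_atTop 0] with R hR
    exact binomialIntegral_eq_two_mul_sin_mul_integral_add_integral s hβ hR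
  have pi_ne_zero : (π : ℂ) ≠ 0 := ofReal_ne_zero.2 Real.pi_ne_zero
  rw [eq_beta, betaIntegral_eq_Gamma_mul_div s (β + 1) hs (by rw [add_re, one_re]; linarith),
    div_mul_eq_div_div, div_eq_mul_inv _ (Gamma (1 - s)),
    inv_Gamma_one_sub (Gamma_ne_zero_of_re_pos hs)]
  field_simp
  ring_nf

theorem differentiable_inv_Gamma_one_sub_mul_Gamma (b : ℂ) :
    Differentiable ℂ fun s ↦ (Gamma (1 - s) * Gamma (b + s))⁻¹ := by
  simp only [mul_inv]
  exact (differentiable_one_div_Gamma.comp (differentiable_id.const_sub 1)).mul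
    (differentiable_one_div_Gamma.comp (differentiable_id.const_add b))

theorem binomialIntegral_eq_of_re_pos {β : ℂ} (s : ℂ) (hβ : 0 < β.re) :
    binomialIntegral β s = 2 * π * Gamma (β + 1) / (Gamma (1 - s) * Gamma (β + 1 + s)) := by
  have quotient_differentiable : Differentiable ℂ
      fun s ↦ 2 * π * Gamma (β + 1) / (Gamma (1 - s) * Gamma (β + 1 + s)) :=
    (differentiable_inv_Gamma_one_sub_mul_Gamma (β + 1)).const_mul _
  have eventually_eq : binomialIntegral β =ᶠ[𝓝 1]
      fun s ↦ 2 * π * Gamma (β + 1) / (Gamma (1 - s) * Gamma (β + 1 + s)) := by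
    filter_upwards [continuous_re.continuousAt.eventually_const_lt (by simp : 0 < (1 : ℂ).re)]
      with s hs using binomialIntegral_eq_of_re_pos_of_re_pos hβ hs
  have eq_everywhere := AnalyticOnNhd.eq_of_eventuallyEq
    (analyticOnNhd_univ_iff_differentiable.2 (differentiable_binomialIntegral (by linarith)))
    (analyticOnNhd_univ_iff_differentiable.2 quotient_differentiable) eventually_eq
  exact congrFun eq_everywhere s

/-- If `1 - s` or `β + 1 + s` is a pole of the Gamma function, the right side is `0` because
`Gamma` is `0` at its poles and `x / 0 = 0`; this agrees with the entire function `1 / Γ`. -/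
theorem integral_one_add_exp_cpow_general (β s : ℂ) (hβ : -1 < β.re) :
    ∫ φ in (-π)..π, (1 + exp (φ * I)) ^ β * exp (φ * I * s) =
      2 * π * Gamma (β + 1) / (Gamma (1 - s) * Gamma (β + 1 + s)) := by
  have re_add_one_pos : 0 < (β + 1).re := by rw [add_re, one_re]; linarith
  have add_one_ne_zero : β + 1 ≠ 0 := fun h ↦ by simp [h] at re_add_one_pos
  have inv_Gamma_shift : (Gamma (β + 1 + s))⁻¹ = (β + 1 + s) * (Gamma (β + 1 + 1 + s))⁻¹ := by
    rw [one_div_Gamma_eq_self_mul_one_div_Gamma_add_one, add_right_comm (β + 1)]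
  refine mul_left_cancel₀ add_one_ne_zero ?_
  calc (β + 1) * binomialIntegral β s
      = (β + 1 + s) * binomialIntegral (β + 1) s := add_one_mul_binomialIntegral s hβ
    _ = (β + 1 + s) * (2 * π * ((β + 1) * Gamma (β + 1)) /
          (Gamma (1 - s) * Gamma (β + 1 + 1 + s))) := by
      rw [binomialIntegral_eq_of_re_pos s re_add_one_pos, Gamma_add_one _ add_one_ne_zero]
    _ = (β + 1) * (2 * π * Gamma (β + 1) / (Gamma (1 - s) * Gamma (β + 1 + s))) := by
      rw [div_eq_mul_inv, div_eq_mul_inv, mul_inv, mul_inv, inv_Gamma_shift]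
      ring

/-- For `α > 1`,
`∫_{-π}^{π} (1 + e^{iφ})^{3α/2 - 2} e^{iφ(1 - α/2)} dφ = 2π Γ(3α/2-1)/(Γ(α/2)Γ(α))`,
with principal branch powers. -/
theorem integral_one_add_exp_cpow (α : ℝ) (hα : 1 < α) :
    ∫ φ in (-Real.pi)..Real.pi,
        (1 + Complex.exp (φ * Complex.I)) ^ ((3 * α / 2 - 2 : ℝ) : ℂ) *
          Complex.exp (φ * Complex.I * (1 - α / 2)) =
      2 * Real.pi * Complex.Gamma (3 * α / 2 - 1) /
        (Complex.Gamma (α / 2) * Complex.Gamma α) := by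
  convert integral_one_add_exp_cpow_general (3 * α / 2 - 2 : ℝ) (1 - α / 2)
    (by rw [ofReal_re]; linarith) using 3 <;> push_cast <;> ring_nf
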